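/- Let r, l be positive integers, ε_S ∈ (0,1), ε_H > 0, α > 0, θ ∈ (0,1), κ_S ≥ 0, S_max > 0. Let f : ℝ^d → ℝ be twice differentiable at x ∈ ℝ^d and suppose ∇²f(x) = Σ_{i=1}^r λ_i·u_i·u_iᵀ where u₁, …, u_r are orthonormal vectors in ℝ^d and λ₁ ≥ … ≥ λ_r with λ_r < −ε_H. Let S ∈ ℝ^{l×d}, set w_i = S·u_i, and assume: (a) 1 − ε_S ≤ ‖w_r‖² ≤ 1 + ε_S and ⟨w_i, w_r⟩² ≤ 16·(1+ε_S)/l for all i ≠ r; (b) 1 − ε_S + 16·((r−1)/l)·((1+ε_S)/(1−ε_S))·(λ₁/λ_r) ≥ 0; (c) ‖S‖ ≤ S_max. Let ŝ ∈ ℝ^l with Sᵀŝ ≠ 0 satisfy: (d) m̂(ŝ) ≤ f(x); (e) for every y ∈ ℝ^l, ⟨y, S∇²f(x)Sᵀ y⟩ + (1/α)·[ ‖Sᵀŝ‖^{-1}·⟨S Sᵀŝ, y⟩² + ‖Sᵀŝ‖·‖Sᵀy‖² ] ≥ −κ_S·‖Sᵀŝ‖·‖y‖²; (f) f(x) − f(x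 + Sᵀŝ) ≥ θ·( q̂(0) − q̂(ŝ) ). Then, with m = 1 − ε_S + 16·((r−1)/l)·((1+ε_S)/(1−ε_S))·min{0, λ₁/λ_r}, one has f(x) − f(x + Sᵀŝ) ≥ ( θ·ε_H³·m³ / (3α) )·( 2·S_max²/α + κ_S )^{-3}. -/

import Mathlib

open scoped BigOperators NNReal
open MeasureTheory ProbabilityTheory

namespace RARC

noncomputable def enorm {n : ℕ} (v : Fin n → ℝ) : ℝ := Real.sqrt (∑ i, v i ^ 2)

noncomputable def opNorm {m n : ℕ} (S : Matrix (Fin m) (Fin n) ℝ) : ℝ :=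
  sSup {c : ℝ | ∃ v : Fin n → ℝ, enorm v = 1 ∧ c = enorm (S.mulVec v)}

noncomputable def grad {n : ℕ} (f : (Fin n → ℝ) → ℝ) (x : Fin n → ℝ) : Fin n → ℝ :=
  fun i => fderiv ℝ f x (Pi.single i 1)

noncomputable def hess {n : ℕ} (f : (Fin n → ℝ) → ℝ) (x : Fin n → ℝ) :
    Matrix (Fin n) (Fin n) ℝ :=
  Matrix.of fun i j =>
    fderiv ℝ (fun y => fderiv ℝ f y (Pi.single j 1)) x (Pi.single i 1)

noncomputable def qhat {d l : ℕ} (f : (Fin d → ℝ) → ℝ) (x : Fin d → ℝ)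
    (S : Matrix (Fin l) (Fin d) ℝ) (s : Fin l → ℝ) : ℝ :=
  f x + (∑ i, S.mulVec (grad f x) i * s i)
    + (1/2) * (∑ i, s i * (S * hess f x * S.transpose).mulVec s i)

noncomputable def mhat {d l : ℕ} (f : (Fin d → ℝ) → ℝ) (x : Fin d → ℝ)
    (S : Matrix (Fin l) (Fin d) ℝ) (α : ℝ) (s : Fin l → ℝ) : ℝ :=
  qhat f x S s + (1/(3*α)) * enorm (S.transpose.mulVec s) ^ 3

noncomputable def lambdaMin {n : ℕ} (A : Matrix (Fin n) (Fin n) ℝ) : ℝ :=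
  sInf {t : ℝ | ∃ v : Fin n → ℝ, enorm v = 1 ∧ t = ∑ i, v i * A.mulVec v i}

def LipschitzHessian {n : ℕ} (f : (Fin n → ℝ) → ℝ) (L : ℝ) : Prop :=
  ∀ x y : Fin n → ℝ, opNorm (hess f y - hess f x) ≤ L * enorm (y - x)

noncomputable def augM {d : ℕ} (f : (Fin d → ℝ) → ℝ) (x : Fin d → ℝ) :
    Matrix (Fin d) (Fin (d+1)) ℝ :=
  Matrix.of fun i j => Fin.cases (grad f x i) (fun j' => hess f x i j') j

noncomputable def gaussVec (l : ℕ) : Measure (Fin l → ℝ) :=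
  Measure.pi fun _ => gaussianReal 0 (l : ℝ≥0)⁻¹

noncomputable def scaledGaussian (l d : ℕ) : Measure (Fin l → Fin d → ℝ) :=
  Measure.pi fun _ : Fin l => Measure.pi fun _ : Fin d => gaussianReal 0 (l : ℝ≥0)⁻¹

/-!
The second-order condition tested at the sketched bottom eigenvector `w = S u_r` bounds the step
length `‖Sᵀ ŝ‖` from below. The exact curvature along `w` is `∑ᵢ λᵢ ⟨S uᵢ, w⟩²`: the term `i = r` is
at most `λ_r (1 - ε_S) ‖w‖²`, while near-orthogonality of the sketched eigenvectors keeps the others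
small, so the curvature is at most `λ_r m ‖w‖²`. The cubic term can compensate at most
`(2 S_max² / α) ‖Sᵀ ŝ‖ ‖w‖²` of this, whence `ε_H m ≤ ‖Sᵀ ŝ‖ (2 S_max² / α + κ_S)`. As `t ↦ t³`
is monotone on all of `ℝ`, this bound can be cubed whatever the sign of `m`, and `m̂ ŝ ≤ f x` says
that the quadratic model decreases by at least `‖Sᵀ ŝ‖³ / (3α)`.
-/

section

open Matrix

variable {d l : ℕ}

lemma enorm_nonneg (v : Fin d → ℝ) : 0 ≤ enorm v := Real.sqrt_nonneg _

lemma enorm_eq_norm_toLp (v : Fin d → ℝ) : enorm v = ‖WithLp.toLp 2 v‖ := by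
  simp [enorm, EuclideanSpace.norm_eq]

lemma enorm_sq (v : Fin d → ℝ) : enorm v ^ 2 = v ⬝ᵥ v := by
  rw [enorm_eq_norm_toLp, EuclideanSpace.real_norm_sq_eq]
  simp only [dotProduct, sq]

lemma enorm_pos {v : Fin d → ℝ} (hv : v ≠ 0) : 0 < enorm v := by
  simpa [enorm_eq_norm_toLp] using hv

lemma dotProduct_sq_le (v w : Fin d → ℝ) : (v ⬝ᵥ w) ^ 2 ≤ enorm v ^ 2 * enorm w ^ 2 := by
  rw [enorm_sq, enorm_sq]
  simpa only [dotProduct, sq] using Finset.sum_mul_sq_le_sq_mul_sq Finset.univ v w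

open scoped Matrix.Norms.L2Operator in
lemma opNorm_eq_l2_opNorm (S : Matrix (Fin l) (Fin d) ℝ) : opNorm S = ‖S‖ := by
  rw [l2_opNorm_def, ← ContinuousLinearMap.sSup_sphere_eq_norm, opNorm]
  congr 1
  ext c
  simp only [Set.mem_ofPred_eq, Set.mem_image, mem_sphere_zero_iff_norm, enorm_eq_norm_toLp]
  constructor
  · rintro ⟨v, hv, rfl⟩
    exact ⟨WithLp.toLp 2 v, hv, rfl⟩
  · rintro ⟨v, hv, rfl⟩
    exact ⟨v.ofLp, hv, rfl⟩

open scoped Matrix.Norms.L2Operator in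
lemma opNorm_nonneg (S : Matrix (Fin l) (Fin d) ℝ) : 0 ≤ opNorm S := by
  rw [opNorm_eq_l2_opNorm]
  exact norm_nonneg _

open scoped Matrix.Norms.L2Operator in
lemma enorm_transpose_mulVec_le (S : Matrix (Fin l) (Fin d) ℝ) (y : Fin l → ℝ) :
    enorm (Sᵀ *ᵥ y) ≤ opNorm S * enorm y := by
  rw [opNorm_eq_l2_opNorm, ← l2_opNorm_conjTranspose, conjTranspose_eq_transpose_of_trivial,
    enorm_eq_norm_toLp, enorm_eq_norm_toLp]
  exact l2_opNorm_mulVec Sᵀ (WithLp.toLp 2 y)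

lemma dotProduct_conj_sum_vecMulVec_mulVec {m n ι R : Type*} [Fintype m] [Fintype n] [Fintype ι]
    [CommSemiring R] (S : Matrix m n R) (lam : ι → R) (u : ι → n → R) (y : m → R) :
    y ⬝ᵥ (S * (∑ i, lam i • vecMulVec (u i) (u i)) * Sᵀ) *ᵥ y
      = ∑ i, lam i * (S *ᵥ u i ⬝ᵥ y) ^ 2 := by
  rw [← mulVec_mulVec, ← mulVec_mulVec, ← dotProduct_transpose_mulVec, sum_mulVec, sum_dotProduct]
  refine Finset.sum_congr rfl fun i _ => ?_
  rw [smul_mulVec, vecMulVec_mulVec, op_smul_eq_smul, smul_dotProduct, smul_dotProduct,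
    dotProduct_transpose_mulVec, dotProduct_comm y, smul_eq_mul, smul_eq_mul, sq]

lemma sum_mul_sq_le_mul {ι R : Type*} [Fintype ι] [Field R] [LinearOrder R]
    [IsStrictOrderedRing R] {lam t : ι → R} {r : ι} {a c P : R} (ha : 0 < a) (hP : 0 ≤ P)
    (hr : lam r ≤ 0) (hlam : ∀ i, i ≠ r → lam i ≤ P) (htr : a ≤ t r)
    (hti : ∀ i, i ≠ r → t i ^ 2 ≤ c) :
    ∑ i, lam i * t i ^ 2 ≤ (a * lam r + (Fintype.card ι - 1) * c / a * P) * t r := by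
  classical
  set Q : R := (Fintype.card ι - 1) * c * P
  have hcard : ∑ _i ∈ Finset.univ.erase r, P * c = Q := by
    have : Nonempty ι := ⟨r⟩
    rw [Finset.sum_const, Finset.card_erase_of_mem (Finset.mem_univ r), Finset.card_univ,
      nsmul_eq_mul, Nat.cast_pred Fintype.card_pos]
    ring
  have hoff : ∑ i ∈ Finset.univ.erase r, lam i * t i ^ 2 ≤ Q := by
    rw [← hcard]
    refine Finset.sum_le_sum fun i hi => ?_
    have hir := Finset.ne_of_mem_erase hi
    exact mul_le_mul (hlam i hir) (hti i hir) (sq_nonneg _) hP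
  have hQ : 0 ≤ Q := by
    rw [← hcard]
    refine Finset.sum_nonneg fun i hi => mul_nonneg hP ?_
    exact (sq_nonneg _).trans (hti i (Finset.ne_of_mem_erase hi))
  calc ∑ i, lam i * t i ^ 2
      = lam r * t r * t r + ∑ i ∈ Finset.univ.erase r, lam i * t i ^ 2 := by
        rw [← Finset.add_sum_erase _ _ (Finset.mem_univ r)]
        ring
    _ ≤ lam r * a * t r + Q / a * t r := by
        refine add_le_add ?_ (hoff.trans ?_)
        · exact mul_le_mul_of_nonneg_right (mul_le_mul_of_nonpos_left htr hr) (ha.le.trans htr)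
        · rw [div_mul_eq_mul_div, le_div_iff₀ ha]
          exact mul_le_mul_of_nonneg_left htr hQ
    _ = (a * lam r + (Fintype.card ι - 1) * c / a * P) * t r := by
        ring

lemma inv_enorm_mul_sq_add_le (S : Matrix (Fin l) (Fin d) ℝ) {s : Fin l → ℝ}
    (hs : Sᵀ *ᵥ s ≠ 0) (y : Fin l → ℝ) :
    (enorm (Sᵀ *ᵥ s))⁻¹ * ((S * Sᵀ) *ᵥ s ⬝ᵥ y) ^ 2 + enorm (Sᵀ *ᵥ s) * enorm (Sᵀ *ᵥ y) ^ 2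
      ≤ 2 * opNorm S ^ 2 * enorm (Sᵀ *ᵥ s) * enorm y ^ 2 := by
  have hN : 0 < enorm (Sᵀ *ᵥ s) := enorm_pos hs
  have hcross : (enorm (Sᵀ *ᵥ s))⁻¹ * ((S * Sᵀ) *ᵥ s ⬝ᵥ y) ^ 2
      ≤ enorm (Sᵀ *ᵥ s) * enorm (Sᵀ *ᵥ y) ^ 2 := by
    rw [inv_mul_le_iff₀ hN, ← mulVec_mulVec, dotProduct_comm, ← dotProduct_transpose_mulVec,
      ← mul_assoc, ← sq]
    exact dotProduct_sq_le _ _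
  have htranspose : enorm (Sᵀ *ᵥ y) ^ 2 ≤ opNorm S ^ 2 * enorm y ^ 2 := by
    rw [← mul_pow]
    exact pow_le_pow_left₀ (enorm_nonneg _) (enorm_transpose_mulVec_le S y) 2
  linarith [mul_le_mul_of_nonneg_left htranspose hN.le]

lemma neg_le_enorm_mul_of_curvature_le {S : Matrix (Fin l) (Fin d) ℝ} {B : Matrix (Fin l) (Fin l) ℝ}
    {s w : Fin l → ℝ} {α κ μ : ℝ} (hα : 0 < α) (hs : Sᵀ *ᵥ s ≠ 0) (hw : 0 < enorm w ^ 2)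
    (hcurv : w ⬝ᵥ B *ᵥ w ≤ μ * enorm w ^ 2)
    (hsecond : -κ * enorm (Sᵀ *ᵥ s) * enorm w ^ 2 ≤ w ⬝ᵥ B *ᵥ w
      + (1 / α) * ((enorm (Sᵀ *ᵥ s))⁻¹ * ((S * Sᵀ) *ᵥ s ⬝ᵥ w) ^ 2
          + enorm (Sᵀ *ᵥ s) * enorm (Sᵀ *ᵥ w) ^ 2)) :
    -μ ≤ enorm (Sᵀ *ᵥ s) * (2 * opNorm S ^ 2 / α + κ) := by
  have hcubic := mul_le_mul_of_nonneg_left (inv_enorm_mul_sq_add_le S hs w) (one_div_pos.2 hα).le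
  refine le_of_mul_le_mul_right ?_ hw
  calc -μ * enorm w ^ 2
      ≤ 1 / α * (2 * opNorm S ^ 2 * enorm (Sᵀ *ᵥ s) * enorm w ^ 2)
          + κ * enorm (Sᵀ *ᵥ s) * enorm w ^ 2 := by linarith
    _ = enorm (Sᵀ *ᵥ s) * (2 * opNorm S ^ 2 / α + κ) * enorm w ^ 2 := by ring

lemma mul_min_zero_div {R : Type*} [Field R] [LinearOrder R] [IsStrictOrderedRing R] {t : R}
    (ht : t < 0) (b : R) : t * min 0 (b / t) = max 0 b := by
  rw [(antitone_mul_left ht.le).map_min, mul_zero, mul_div_cancel₀ b ht.ne]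

lemma mul_le_enorm_mul_of_sketched_spectrum {ι : Type*} [Fintype ι] {lam : ι → ℝ}
    {u : ι → Fin d → ℝ} {S : Matrix (Fin l) (Fin d) ℝ} {s : Fin l → ℝ} {r : ι}
    {a c b ε α κ K : ℝ} (ha : 0 < a) (hε : 0 < ε) (hα : 0 < α) (hκ : 0 ≤ κ) (hK : opNorm S ≤ K)
    (hr : lam r ≤ -ε) (hlam : ∀ i, i ≠ r → lam i ≤ b)
    (hwr : a ≤ enorm (S *ᵥ u r) ^ 2) (hwi : ∀ i, i ≠ r → (S *ᵥ u i ⬝ᵥ S *ᵥ u r) ^ 2 ≤ c)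
    (hs : Sᵀ *ᵥ s ≠ 0)
    (hsecond : -κ * enorm (Sᵀ *ᵥ s) * enorm (S *ᵥ u r) ^ 2
      ≤ S *ᵥ u r ⬝ᵥ (S * (∑ i, lam i • vecMulVec (u i) (u i)) * Sᵀ) *ᵥ (S *ᵥ u r)
        + (1 / α) * ((enorm (Sᵀ *ᵥ s))⁻¹ * ((S * Sᵀ) *ᵥ s ⬝ᵥ S *ᵥ u r) ^ 2
          + enorm (Sᵀ *ᵥ s) * enorm (Sᵀ *ᵥ (S *ᵥ u r)) ^ 2)) :
    ε * (a + (Fintype.card ι - 1) * c / a * min 0 (b / lam r))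
      ≤ enorm (Sᵀ *ᵥ s) * (2 * K ^ 2 / α + κ) := by
  set m := a + (Fintype.card ι - 1) * c / a * min 0 (b / lam r) with hm
  have hneg : lam r < 0 := by linarith
  have hcurv : S *ᵥ u r ⬝ᵥ (S * (∑ i, lam i • vecMulVec (u i) (u i)) * Sᵀ) *ᵥ (S *ᵥ u r)
      ≤ lam r * m * enorm (S *ᵥ u r) ^ 2 := by
    rw [dotProduct_conj_sum_vecMulVec_mulVec]
    have hlam' : ∀ i, i ≠ r → lam i ≤ max 0 b := fun i hi => (hlam i hi).trans (le_max_right 0 b)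
    refine (sum_mul_sq_le_mul ha (le_max_left 0 b) hneg.le hlam' (hwr.trans_eq (enorm_sq _))
      hwi).trans_eq ?_
    rw [← mul_min_zero_div hneg, ← enorm_sq, hm]
    ring
  have hstep : -(lam r * m) ≤ enorm (Sᵀ *ᵥ s) * (2 * K ^ 2 / α + κ) := by
    refine (neg_le_enorm_mul_of_curvature_le hα hs (ha.trans_le hwr) hcurv hsecond).trans ?_
    have := enorm_nonneg (Sᵀ *ᵥ s)
    have := opNorm_nonneg S
    gcongr
  rcases le_total 0 m with hm₀ | hm₀
  · calc ε * m ≤ -lam r * m := mul_le_mul_of_nonneg_right (by linarith) hm₀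
      _ = -(lam r * m) := neg_mul _ _
      _ ≤ _ := hstep
  · exact (mul_nonpos_of_nonneg_of_nonpos hε.le hm₀).trans
      (mul_nonneg (enorm_nonneg _) (by positivity))

/-- The reduced quadratic model `q̂` with value `f₀` at the origin, and with arbitrary (for instance
inexact) first- and second-order data `g` and `H` in place of the gradient and the Hessian. -/
noncomputable def quadModel (f₀ : ℝ) (g : Fin d → ℝ) (H : Matrix (Fin d) (Fin d) ℝ)
    (S : Matrix (Fin l) (Fin d) ℝ) (s : Fin l → ℝ) : ℝ :=
  f₀ + S *ᵥ g ⬝ᵥ s + (1 / 2) * (s ⬝ᵥ (S * H * Sᵀ) *ᵥ s)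

/-- The reduced cubic model `m̂`: the quadratic model regularized by the cubed length of the
full-space step `Sᵀ s`. -/
noncomputable def cubicModel (f₀ : ℝ) (g : Fin d → ℝ) (H : Matrix (Fin d) (Fin d) ℝ)
    (S : Matrix (Fin l) (Fin d) ℝ) (α : ℝ) (s : Fin l → ℝ) : ℝ :=
  quadModel f₀ g H S s + (1 / (3 * α)) * enorm (Sᵀ *ᵥ s) ^ 3

lemma quadModel_zero (f₀ : ℝ) (g : Fin d → ℝ) (H : Matrix (Fin d) (Fin d) ℝ)
    (S : Matrix (Fin l) (Fin d) ℝ) : quadModel f₀ g H S 0 = f₀ := by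
  simp [quadModel]

theorem stmt18_general {ι : Type*} [Fintype ι] {a c b ε α θ κ K : ℝ}
    (ha : 0 < a) (hε : 0 < ε) (hα : 0 < α) (hθ : 0 ≤ θ) (hκ : 0 ≤ κ)
    (f : (Fin d → ℝ) → ℝ) (x g : Fin d → ℝ) {H : Matrix (Fin d) (Fin d) ℝ}
    {lam : ι → ℝ} {u : ι → Fin d → ℝ} {r : ι}
    (hH : H = ∑ i, lam i • vecMulVec (u i) (u i))
    (hr : lam r ≤ -ε) (hlam : ∀ i, i ≠ r → lam i ≤ b) {S : Matrix (Fin l) (Fin d) ℝ}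
    (hwr : a ≤ enorm (S *ᵥ u r) ^ 2) (hwi : ∀ i, i ≠ r → (S *ᵥ u i ⬝ᵥ S *ᵥ u r) ^ 2 ≤ c)
    (hK : opNorm S ≤ K) {s : Fin l → ℝ} (hs : Sᵀ *ᵥ s ≠ 0)
    (hmodel : cubicModel (f x) g H S α s ≤ f x)
    (hsecond : ∀ y : Fin l → ℝ, -κ * enorm (Sᵀ *ᵥ s) * enorm y ^ 2
      ≤ y ⬝ᵥ (S * H * Sᵀ) *ᵥ y
        + (1 / α) * ((enorm (Sᵀ *ᵥ s))⁻¹ * ((S * Sᵀ) *ᵥ s ⬝ᵥ y) ^ 2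
          + enorm (Sᵀ *ᵥ s) * enorm (Sᵀ *ᵥ y) ^ 2))
    (hdecrease : θ * (quadModel (f x) g H S 0 - quadModel (f x) g H S s)
      ≤ f x - f (x + Sᵀ *ᵥ s)) :
    θ * ε ^ 3 * (a + (Fintype.card ι - 1) * c / a * min 0 (b / lam r)) ^ 3 / (3 * α)
        * ((2 * K ^ 2 / α + κ) ^ 3)⁻¹
      ≤ f x - f (x + Sᵀ *ᵥ s) := by
  subst hH
  set m := a + (Fintype.card ι - 1) * c / a * min 0 (b / lam r)
  have hstep : ε * m / (2 * K ^ 2 / α + κ) ≤ enorm (Sᵀ *ᵥ s) :=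
    div_le_of_le_mul₀ (by positivity) (enorm_nonneg _) <|
      mul_le_enorm_mul_of_sketched_spectrum ha hε hα hκ hK hr hlam hwr hwi hs (hsecond _)
  calc θ * ε ^ 3 * m ^ 3 / (3 * α) * ((2 * K ^ 2 / α + κ) ^ 3)⁻¹
      = θ * ((1 / (3 * α)) * (ε * m / (2 * K ^ 2 / α + κ)) ^ 3) := by
        rw [div_pow]
        ring
    _ ≤ θ * ((1 / (3 * α)) * enorm (Sᵀ *ᵥ s) ^ 3) := by
        have := (Odd.pow_le_pow (by decide : Odd 3)).2 hstep
        gcongr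
    _ ≤ θ * (quadModel (f x) g _ S 0 - quadModel (f x) g _ S s) := by
        refine mul_le_mul_of_nonneg_left ?_ hθ
        rw [quadModel_zero]
        exact le_sub_iff_add_le'.2 hmodel
    _ ≤ f x - f (x + Sᵀ *ᵥ s) := hdecrease

end

theorem stmt18 {d : ℕ} (n l : ℕ) (hl : 0 < l) (ε_S ε_H α θ κ_S S_max : ℝ)
    (hεS : ε_S ∈ Set.Ioo (0:ℝ) 1) (hεH : 0 < ε_H) (hα : 0 < α)
    (hθ : θ ∈ Set.Ioo (0:ℝ) 1) (hκ : 0 ≤ κ_S) (hSmax : 0 < S_max)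
    (f : (Fin d → ℝ) → ℝ) (x : Fin d → ℝ)
    (hf1 : DifferentiableAt ℝ f x) (hf2 : DifferentiableAt ℝ (fderiv ℝ f) x)
    (lam : Fin (n+1) → ℝ) (hlam : Antitone lam) (hlast : lam (Fin.last n) < -ε_H)
    (u : Fin (n+1) → (Fin d → ℝ))
    (hortho : ∀ i j, (∑ k, u i k * u j k) = if i = j then (1:ℝ) else 0)
    (hhess : hess f x = ∑ i, lam i • Matrix.vecMulVec (u i) (u i))
    (S : Matrix (Fin l) (Fin d) ℝ)
    (hw1 : 1 - ε_S ≤ enorm (S.mulVec (u (Fin.last n))) ^ 2)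
    (hw2 : enorm (S.mulVec (u (Fin.last n))) ^ 2 ≤ 1 + ε_S)
    (hw3 : ∀ i, i ≠ Fin.last n →
      (∑ j, S.mulVec (u i) j * S.mulVec (u (Fin.last n)) j) ^ 2 ≤ 16 * (1 + ε_S) / l)
    (hb : 1 - ε_S + 16 * ((n:ℝ)/l) * ((1 + ε_S)/(1 - ε_S))
            * (lam 0 / lam (Fin.last n)) ≥ 0)
    (hcS : opNorm S ≤ S_max)
    (sh : Fin l → ℝ) (hs : S.transpose.mulVec sh ≠ 0)
    (hd : mhat f x S α sh ≤ f x)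
    (he : ∀ y : Fin l → ℝ,
      (∑ i, y i * (S * hess f x * S.transpose).mulVec y i)
        + (1/α) * ((enorm (S.transpose.mulVec sh))⁻¹
              * (∑ i, (S * S.transpose).mulVec sh i * y i) ^ 2
            + enorm (S.transpose.mulVec sh) * enorm (S.transpose.mulVec y) ^ 2)
        ≥ -κ_S * enorm (S.transpose.mulVec sh) * enorm y ^ 2)
    (hf' : f x - f (x + S.transpose.mulVec sh) ≥ θ * (qhat f x S 0 - qhat f x S sh)) :
    f x - f (x + S.transpose.mulVec sh)
      ≥ (θ * ε_H ^ 3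
          * (1 - ε_S + 16 * ((n:ℝ)/l) * ((1 + ε_S)/(1 - ε_S))
              * min 0 (lam 0 / lam (Fin.last n))) ^ 3 / (3 * α))
        * ((2 * S_max ^ 2 / α + κ_S) ^ 3)⁻¹ := by
  rw [show 16 * ((n : ℝ) / l) * ((1 + ε_S) / (1 - ε_S))
    = (Fintype.card (Fin (n + 1)) - 1) * (16 * (1 + ε_S) / l) / (1 - ε_S) by
      simp only [Fintype.card_fin, Nat.cast_add, Nat.cast_one]
      ring]
  exact stmt18_general (sub_pos.2 hεS.2) hεH hα hθ.1.le hκ f x (grad f x) hhess hlast.le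
    (fun i _ => hlam (Fin.zero_le i)) hw1 hw3 hcS hs hd he hf'

end RARC
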